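/- For every integer h ≥ 1, the denominator polynomial Q_h admits the explicit expansion Q_h(a,b;q,t) = Σ_{m≥0} (−t)^m q^{m(m-1)} ( (1−b)·[h−m choose m]_q + b·[h+1−m choose m]_q − (1−a)(1−b)·[h−1−m choose m−1]_q − (1−a)b·[h−m choose m−1]_q ), where the sum is finite since the q-binomial coefficients vanish for large m. -/

import Mathlib

/-! The right-hand side equals `R_{h-1} + b (R_h - R_{h-1})`, where
`R_n = Σ_m (-t)^m q^{m(m-1)} ([n+1-m choose m] - (1-a)[n-m choose m-1])`, so everything reduces to
`R_n = Q_n(a,1)` for `n ≥ 0`, with `Q_0(a,1) = 1`. The q-Pascal rule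
`[n choose k] = [n-1 choose k] + q^{n-k} [n-1 choose k-1]` (`qbinom_pascal`), applied to each
summand (`summand_rec`), gives `R_n = R_{n-1} - q^{n-1} t R_{n-2}` for `n ≥ 2`, which is the
recurrence defining `Q_n(a,1)`; the cases `n = 0, 1` are direct. The same recurrence then rewrites
`R_h - R_{h-1}` into the term of `Q_h(a,b)` that is linear in `b`. -/

/-! Statement 14: for every `h ≥ 1`,
`Q_h(a,b;q,t) = Σ_{m≥0} (−t)^m q^{m(m-1)} ( (1−b)[h−m choose m]_q + b[h+1−m choose m]_q
 − (1−a)(1−b)[h−1−m choose m−1]_q − (1−a)b[h−m choose m−1]_q )`,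
the sum being finite since the q-binomial coefficients vanish for large `m`. -/

open Finset PowerSeries

noncomputable section

/-- The field of rational functions in the four variables `a`, `b`, `q`, `t`. -/
abbrev K : Type := FractionRing (MvPolynomial (Fin 4) ℚ)

/-- The indeterminate `a`. -/
def av : K := algebraMap (MvPolynomial (Fin 4) ℚ) K (MvPolynomial.X 0)
/-- The indeterminate `b`. -/
def bv : K := algebraMap (MvPolynomial (Fin 4) ℚ) K (MvPolynomial.X 1)
/-- The indeterminate `q`. -/
def qv : K := algebraMap (MvPolynomial (Fin 4) ℚ) K (MvPolynomial.X 2)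
/-- The indeterminate `t`. -/
def tv : K := algebraMap (MvPolynomial (Fin 4) ℚ) K (MvPolynomial.X 3)

/-- The polynomials `Q_h(a,1;q,t)`: `Q_1 = 1 - a t`, `Q_2 = 1 - a t - q t`, and
`Q_h = Q_{h-1}(a,1) - q^{h-1} t Q_{h-2}(a,1)` for `h ≥ 3`.
(The value at `h = 0` is an unused placeholder.) -/
def Qone (a : K) : ℕ → K
  | 0 => 1
  | 1 => 1 - a * tv
  | 2 => 1 - a * tv - qv * tv
  | n + 3 => Qone a (n + 2) - qv ^ (n + 2) * tv * Qone a (n + 1)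

/-- The denominator polynomials `Q_h(a,b;q,t)`: `Q_1 = 1 - a b t`,
`Q_2 = 1 - a t - b q t`, and for `h ≥ 3`,
`Q_h(a,b;q,t) = Q_{h-1}(a,1;q,t) - b q^{h-1} t · Q_{h-2}(a,1;q,t)`.
(The value at `h = 0` is an unused placeholder.) -/
def Qden (a b : K) : ℕ → K
  | 0 => 1
  | 1 => 1 - a * b * tv
  | 2 => 1 - a * tv - b * qv * tv
  | n + 3 => Qone a (n + 2) - b * qv ^ (n + 2) * tv * Qone a (n + 1)

/-- `W(z;a,b;q,t) = Σ_{h≥1} Q_h(a,b;q,t) z^h`, a formal power series in `z`. -/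
def W (a b : K) : PowerSeries K :=
  PowerSeries.mk fun h => if h = 0 then 0 else Qden a b h

/-- The q-Pochhammer symbol `(q;q)_n = ∏_{i=0}^{n-1} (1 - q·q^i)`. -/
def qPochQQ (n : ℕ) : K := ∏ i ∈ Finset.range n, (1 - qv * qv ^ i)

/-- The q-binomial coefficient `[n choose k]_q = (q;q)_n/((q;q)_k (q;q)_{n-k})` for
`0 ≤ k ≤ n`, and `0` whenever `k < 0` or `k > n`. -/
def qbinom (n k : ℤ) : K :=
  if 0 ≤ k ∧ k ≤ n then
    qPochQQ n.toNat / (qPochQQ k.toNat * qPochQQ (n - k).toNat)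
  else 0

lemma qv_ne_zero : qv ≠ 0 := by
  unfold qv
  rw [Ne, FaithfulSMul.algebraMap_eq_zero_iff]
  exact MvPolynomial.X_ne_zero _

lemma one_sub_qv_pow_ne_zero (n : ℕ) : 1 - qv * qv ^ n ≠ 0 := by
  intro h
  have h1 : algebraMap (MvPolynomial (Fin 4) ℚ) K
      (1 - MvPolynomial.X 2 * MvPolynomial.X 2 ^ n) = 0 := by
    simpa [qv] using h
  rw [FaithfulSMul.algebraMap_eq_zero_iff] at h1
  simpa using congrArg (MvPolynomial.eval (fun _ => (0 : ℚ))) h1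

lemma qPochQQ_ne_zero (n : ℕ) : qPochQQ n ≠ 0 :=
  Finset.prod_ne_zero_iff.2 fun i _ => one_sub_qv_pow_ne_zero i

lemma qPochQQ_succ (n : ℕ) : qPochQQ (n + 1) = qPochQQ n * (1 - qv * qv ^ n) :=
  Finset.prod_range_succ _ _

lemma qbinom_eq_zero {n k : ℤ} (h : k < 0 ∨ n < k) : qbinom n k = 0 :=
  if_neg (by omega)

lemma qbinom_add (j k : ℕ) :
    qbinom ((j : ℤ) + k) k = qPochQQ (j + k) / (qPochQQ k * qPochQQ j) := by
  rw [qbinom, if_pos (by omega)]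
  congr 3; all_goals omega

lemma qbinom_zero {n : ℤ} (h : 0 ≤ n) : qbinom n 0 = 1 := by
  lift n to ℕ using h
  have := qbinom_add n 0
  simpa [show qPochQQ 0 = 1 from rfl, div_self (qPochQQ_ne_zero n)] using this

lemma qbinom_self {n : ℤ} (h : 0 ≤ n) : qbinom n n = 1 := by
  lift n to ℕ using h
  have := qbinom_add 0 n
  simpa [show qPochQQ 0 = 1 from rfl, div_self (qPochQQ_ne_zero n)] using this

/-- The q-Pascal rule. With the convention that out-of-range coefficients vanish it holds for all
integers `n`, `k` other than `n = k = 0`. -/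
lemma qbinom_pascal (n k : ℤ) (h : n ≠ 0 ∨ k ≠ 0) :
    qbinom n k = qbinom (n - 1) k + qv ^ (n - k) * qbinom (n - 1) (k - 1) := by
  rcases lt_or_ge k 0 with hk | hk
  · simp [qbinom_eq_zero, hk, show k - 1 < 0 by omega]
  rcases lt_or_ge n k with hn | hn
  · simp [qbinom_eq_zero, hn, show n - 1 < k by omega]
  rcases hk.eq_or_lt with rfl | hk
  · rw [qbinom_zero hn, qbinom_zero (by omega), qbinom_eq_zero (k := 0 - 1) (by omega)]
    simp
  rcases hn.eq_or_lt with rfl | hn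
  · rw [qbinom_self hk.le, qbinom_self (by omega), qbinom_eq_zero (by omega)]
    simp
  obtain ⟨i, rfl⟩ : ∃ i : ℕ, k = i + 1 := ⟨(k - 1).toNat, by omega⟩
  obtain ⟨j, rfl⟩ : ∃ j : ℕ, n = j + 1 + (i + 1) := ⟨(n - 1 - (i + 1)).toNat, by omega⟩
  have e1 := qbinom_add (j + 1) (i + 1)
  have e2 := qbinom_add j (i + 1)
  have e3 := qbinom_add (j + 1) i
  push_cast at e1 e2 e3
  rw [show (j : ℤ) + 1 + (i + 1) - 1 = j + (i + 1) by ring, e1, e2,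
    show (i : ℤ) + 1 - 1 = i by ring, show (j : ℤ) + (i + 1) = j + 1 + i by ring, e3,
    show (j : ℤ) + 1 + (i + 1) - (i + 1) = ((j + 1 : ℕ) : ℤ) by push_cast; ring, zpow_natCast,
    show j + 1 + (i + 1) = j + i + 1 + 1 by ring, show j + (i + 1) = j + i + 1 by ring,
    show j + 1 + i = j + i + 1 by ring]
  have hi := qPochQQ_ne_zero i
  have hj := qPochQQ_ne_zero j
  have hi' := one_sub_qv_pow_ne_zero i
  have hj' := one_sub_qv_pow_ne_zero j
  rw [qPochQQ_succ (j + i + 1), qPochQQ_succ i, qPochQQ_succ j]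
  field_simp
  ring

/-- The `m`-th summand `(-t)^m q^{m(m-1)} ([n+1-m choose m] - (1-a)[n-m choose m-1])` of the
expansion of `Q_n(a,1)`. -/
def summand (a : K) (n : ℤ) (m : ℕ) : K :=
  (-tv) ^ m * qv ^ (m * (m - 1)) *
    (qbinom (n + 1 - m) m - (1 - a) * qbinom (n - m) ((m : ℤ) - 1))

lemma summand_eq_zero (a : K) {n : ℤ} {m : ℕ} (h : n + 1 < 2 * m) :
    summand a n m = 0 := by
  rw [summand, qbinom_eq_zero (by omega), qbinom_eq_zero (by omega)]
  simp

lemma summand_zero (a : K) {n : ℤ} (h : 0 ≤ n) : summand a n 0 = 1 := by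
  have h1 := qbinom_zero (show 0 ≤ n + 1 by omega)
  have h2 := qbinom_eq_zero (n := n) (k := -1) (by omega)
  simp [summand, h1, h2]

lemma summand_rec (a : K) (k m : ℕ) :
    summand a (k + 2) (m + 1)
      = summand a (k + 1) (m + 1) - qv ^ (k + 1) * tv * summand a k m := by
  -- For `m = 0` the truncated `m - 1` in the exponent is harmless, as it is multiplied by `m`.
  have hpow : qv ^ ((m + 1) * m) * qv ^ ((k : ℤ) + 1 - 2 * m)
      = qv ^ (k + 1) * qv ^ (m * (m - 1)) := by
    rw [← zpow_natCast, ← zpow_natCast, ← zpow_natCast, ← zpow_add₀ qv_ne_zero,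
      ← zpow_add₀ qv_ne_zero]
    congr 1
    cases m with
    | zero => simp
    | succ m => rw [Nat.add_sub_cancel]; push_cast; ring
  have p1 := qbinom_pascal (k + 2 + 1 - (m + 1)) (m + 1) (by omega)
  have p2 := qbinom_pascal (k + 2 - (m + 1)) m (by omega)
  rw [show (k : ℤ) + 2 + 1 - (m + 1) - 1 = k + 1 - m by ring,
    show (k : ℤ) + 2 + 1 - (m + 1) - (m + 1) = k + 1 - 2 * m by ring,
    show (m : ℤ) + 1 - 1 = m by ring] at p1
  rw [show (k : ℤ) + 2 - (m + 1) - 1 = k - m by ring,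
    show (k : ℤ) + 2 - (m + 1) - m = k + 1 - 2 * m by ring] at p2
  simp only [summand, Nat.add_sub_cancel]
  push_cast
  rw [p1, show (m : ℤ) + 1 - 1 = m by ring, p2,
    show (k : ℤ) + 1 + 1 - (m + 1) = k + 1 - m by ring,
    show (k : ℤ) + 1 - (m + 1) = k - m by ring]
  linear_combination (-tv) ^ (m + 1) *
    (qbinom (k + 1 - m) m - (1 - a) * qbinom (k - m) ((m : ℤ) - 1)) * hpow

/-- The recurrence defining `Q_n(a,1)` already holds at `n = 2`, with `Q_0(a,1) = 1`. -/
lemma Qone_rec (a : K) (n : ℕ) :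
    Qone a (n + 2) = Qone a (n + 1) - qv ^ (n + 1) * tv * Qone a n := by
  cases n with
  | zero => simp [Qone]
  | succ n => rfl

/-- The expansion of `Q_n(a,1)`, summed up to any bound beyond which all summands vanish. -/
lemma sum_summand (a : K) (n N : ℕ) (hN : n + 2 ≤ N) :
    ∑ m ∈ Finset.range N, summand a n m = Qone a n := by
  induction n using Nat.strong_induction_on generalizing N with
  | _ n ih =>
    match n with
    | 0 =>
      obtain ⟨N, rfl⟩ : ∃ M, N = M + 1 := ⟨N - 1, by omega⟩
      rw [Finset.sum_range_succ', summand_zero a (by simp),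
        Finset.sum_eq_zero fun m _ => summand_eq_zero a (by push_cast; omega)]
      simp [Qone]
    | 1 =>
      obtain ⟨N, rfl⟩ : ∃ M, N = M + 2 := ⟨N - 2, by omega⟩
      rw [Finset.sum_range_succ', summand_zero a (by simp), Finset.sum_range_succ',
        Finset.sum_eq_zero fun m _ => summand_eq_zero a (by push_cast; omega)]
      have h0 := qbinom_self (n := 0) le_rfl
      have h1 := qbinom_self (n := 1) (by norm_num)
      simp [Qone, summand, h0, h1]
      ring
    | k + 2 =>
      obtain ⟨N, rfl⟩ : ∃ M, N = M + 1 := ⟨N - 1, by omega⟩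
      have i1 := ih (k + 1) (by omega) (N + 1) (by omega)
      have i0 := ih k (by omega) N (by omega)
      push_cast at i1 ⊢
      rw [Qone_rec, ← i1, ← i0, Finset.sum_range_succ', Finset.sum_range_succ',
        summand_zero a (by omega), summand_zero a (by omega), Finset.mul_sum]
      simp only [summand_rec, Finset.sum_sub_distrib]
      ring

lemma Qden_eq (a b : K) (n : ℕ) :
    Qden a b (n + 1) = (1 - b) * Qone a n + b * Qone a (n + 1) := by
  match n with
  | 0 => simp [Qden, Qone]; ring
  | 1 => simp [Qden, Qone]; ring
  | n + 2 => rw [Qone_rec a (n + 1), Qden]; ring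

/-- For every `h ≥ 1`,
`Q_h(a,b;q,t) = Σ_{m≥0} (−t)^m q^{m(m-1)} ((1−b)·[h−m, m]_q + b·[h+1−m, m]_q
  − (1−a)(1−b)·[h−1−m, m−1]_q − (1−a)b·[h−m, m−1]_q)`. -/
theorem Q_explicit (h : ℕ) (hh : 1 ≤ h) :
    Qden av bv h
      = ∑ᶠ m : ℕ, (-tv) ^ m * qv ^ (m * (m - 1)) *
          ((1 - bv) * qbinom ((h : ℤ) - m) (m : ℤ)
            + bv * qbinom ((h : ℤ) + 1 - m) (m : ℤ)
            - (1 - av) * (1 - bv) * qbinom ((h : ℤ) - 1 - m) ((m : ℤ) - 1)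
            - (1 - av) * bv * qbinom ((h : ℤ) - m) ((m : ℤ) - 1)) := by
  obtain ⟨n, rfl⟩ : ∃ n, h = n + 1 := ⟨h - 1, by omega⟩
  have key : ∀ m : ℕ, (-tv) ^ m * qv ^ (m * (m - 1)) *
      ((1 - bv) * qbinom (((n + 1 : ℕ) : ℤ) - m) (m : ℤ)
        + bv * qbinom (((n + 1 : ℕ) : ℤ) + 1 - m) (m : ℤ)
        - (1 - av) * (1 - bv) * qbinom (((n + 1 : ℕ) : ℤ) - 1 - m) ((m : ℤ) - 1)
        - (1 - av) * bv * qbinom (((n + 1 : ℕ) : ℤ) - m) ((m : ℤ) - 1))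
      = (1 - bv) * summand av n m + bv * summand av (n + 1 : ℕ) m := by
    intro m
    simp only [summand]
    push_cast
    rw [show (n : ℤ) + 1 - 1 - m = n - m by ring]
    ring
  rw [finsum_congr key, finsum_eq_sum_of_support_subset (s := Finset.range (n + 3)),
    Finset.sum_add_distrib, ← Finset.mul_sum, ← Finset.mul_sum, sum_summand _ _ _ (by omega),
    sum_summand _ _ _ (by omega), Qden_eq]
  intro m hm
  by_contra hlt
  simp only [Finset.coe_range, Set.mem_Iio, not_lt] at hlt
  apply hm
  simp only []
  rw [summand_eq_zero av (by omega), summand_eq_zero av (by push_cast; omega)]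
  simp

end
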